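/- There is an absolute constant c₀ such that for every r with 2 < r < ∞ (with conjugate exponent r', 1/r + 1/r' = 1), every n ∈ ℕ, and every bounded linear operator T : X → Y between real Banach spaces of rank at most n which is absolutely (r,1)-summing, one has π_1(T) ≤ c₀ · (1/2 − 1/r)^{−1/r'} · n^{1/r'} · π_{r,1}(T). -/

import Mathlib

open scoped ENNReal NNReal BigOperators

noncomputable section

/-- The `ℓ_p`-sum `(∑ i, f i ^ p) ^ (1/p)` of a finite family in `ℝ≥0∞`,
with the usual sup-modification for `p = ∞`. -/
def eSum (p : ℝ≥0∞) {ι : Type*} [Fintype ι] (f : ι → ℝ≥0∞) : ℝ≥0∞ :=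
  if p = ∞ then ⨆ i, f i else (∑ i, f i ^ p.toReal) ^ (1 / p.toReal)

/-- The weak `ℓ_q`-norm of a finite family of vectors:
`sup { (∑ k |⟨x_k, x*⟩|^q)^(1/q) : x* in the unit ball of the dual }`. -/
def weakLq (q : ℝ≥0∞) {X : Type*} [NormedAddCommGroup X] [NormedSpace ℝ X]
    {n : ℕ} (x : Fin n → X) : ℝ≥0∞ :=
  ⨆ f : {f : X →L[ℝ] ℝ // ‖f‖ ≤ 1}, eSum q fun k => ENNReal.ofReal |f.1 (x k)|

/-- The `(p,q)`-summing norm of `T` with respect to `n` vectors. -/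
def piN (p q : ℝ≥0∞) {X Y : Type*} [NormedAddCommGroup X] [NormedSpace ℝ X]
    [NormedAddCommGroup Y] [NormedSpace ℝ Y] (n : ℕ) (T : X →L[ℝ] Y) : ℝ≥0∞ :=
  ⨆ x : {x : Fin n → X // weakLq q x ≤ 1}, eSum p fun k => ENNReal.ofReal ‖T (x.1 k)‖

/-- The `(p,q)`-summing norm of `T`. -/
def piPQ (p q : ℝ≥0∞) {X Y : Type*} [NormedAddCommGroup X] [NormedSpace ℝ X]
    [NormedAddCommGroup Y] [NormedSpace ℝ Y] (T : X →L[ℝ] Y) : ℝ≥0∞ :=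
  ⨆ n : ℕ, piN p q n T

/-- `T` has rank at most `n`: its range is a finite-dimensional subspace of
dimension at most `n`. -/
def RankLE {X Y : Type*} [NormedAddCommGroup X] [NormedSpace ℝ X]
    [NormedAddCommGroup Y] [NormedSpace ℝ Y] (T : X →L[ℝ] Y) (n : ℕ) : Prop :=
  FiniteDimensional ℝ (LinearMap.range (T : X →ₗ[ℝ] Y)) ∧
    Module.finrank ℝ (LinearMap.range (T : X →ₗ[ℝ] Y)) ≤ n

/-- The average of `‖∑ k, ε k • x k‖²` over all `2^n` sign choices `ε ∈ {-1,1}^n`. -/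
def radAvg {X : Type*} [NormedAddCommGroup X] [NormedSpace ℝ X] {n : ℕ}
    (x : Fin n → X) : ℝ :=
  (∑ ε : Fin n → Bool, ‖∑ k, (if ε k then (1 : ℝ) else -1) • x k‖ ^ 2) / 2 ^ n

/-- The Rademacher cotype `q` constant of `T` with respect to `n` vectors. -/
def cotypeN (q : ℝ) {X Y : Type*} [NormedAddCommGroup X] [NormedSpace ℝ X]
    [NormedAddCommGroup Y] [NormedSpace ℝ Y] (n : ℕ) (T : X →L[ℝ] Y) : ℝ≥0∞ :=
  ⨆ x : {x : Fin n → X // Real.sqrt (radAvg x) ≤ 1},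
    (∑ k, ENNReal.ofReal ‖T (x.1 k)‖ ^ q) ^ (1 / q)

/-- The Rademacher cotype `q` constant of `T`. -/
def cotype (q : ℝ) {X Y : Type*} [NormedAddCommGroup X] [NormedSpace ℝ X]
    [NormedAddCommGroup Y] [NormedSpace ℝ Y] (T : X →L[ℝ] Y) : ℝ≥0∞ :=
  ⨆ n : ℕ, cotypeN q n T

/-!
Let `x₁, …, x_m` have weak `ℓ_1`-norm at most `1` and let `u : ℓ_∞^m → Y` send `e_k` to `T x_k`; it
is `(r, 1)`-summing with constant `C = π_{r,1}(T)`, and `∑ k, ‖T x_k‖ = ∑ k, ‖u e_k‖`.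

* Pisier's domination theorem gives weights `w` of sum at most `1` with
  `‖u x‖ ^ r ≤ r C ^ r ∑ k, w_k |x_k|` on the unit ball. Cutting `x` into the dyadic levels of
  `|x|`, on which `∑ w |x|` and `∑ w x²` are comparable after scaling, and summing by Hölder gives
  `‖u x‖ ≤ (1/2 - 1/r) ^ (-1/r') (2 r C ^ r ∑ k, w_k x_k ^ 2) ^ (1/r) ‖x‖_∞ ^ (1 - 2/r)`,
  where the first factor comes from a geometric series over the levels.
* Pairing `u e_k` with norming functionals turns `∑ k, ‖u e_k‖` into the trace of an operator of
  rank at most `n`, which is an average of values of `u` (up to contractions) on the sections `P_l`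
  of the reproducing kernel of its range in `L_2(w + ν)`. Choosing for `ν` an optimal design in the
  sense of Kiefer and Wolfowitz makes both `‖P_l‖_∞` and `‖P_l‖²` in `L_2(w)` at most `n`, so the
  first step bounds `‖u P_l‖` by a multiple of `n ^ (1/r) n ^ (1 - 2/r) = n ^ (1/r')`.
-/

open scoped Matrix

section OptimalDesign

variable {ι κ : Type*}

lemma le_of_forall_one_add_mul_le_one_add_pow {s : ℝ} {d : ℕ}
    (h : ∀ t : ℝ, 0 < t → 1 + t * s ≤ (1 + t) ^ d) : s ≤ d := by
  have hderiv : HasDerivAt (fun t : ℝ => (1 + t) ^ d) d 0 := by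
    simpa using ((hasDerivAt_id (0 : ℝ)).const_add 1).fun_pow d
  refine ge_of_tendsto hderiv.tendsto_slope_zero_right ?_
  filter_upwards [self_mem_nhdsWithin] with t ht
  rw [zero_add, add_zero, one_pow, smul_eq_mul, ← div_eq_inv_mul, le_div_iff₀ ht]
  linarith [h t ht]

section Determinant

variable [Fintype κ] [DecidableEq κ]

lemma sq_dotProduct_le_of_posDef {M : Matrix κ κ ℝ} (hM : M.PosDef)
    (v a : κ → ℝ) : (v ⬝ᵥ a) ^ 2 ≤ (v ⬝ᵥ M⁻¹ *ᵥ v) * (a ⬝ᵥ M *ᵥ a) := by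
  have hMt : Mᵀ = M := by simpa using hM.isHermitian.eq
  have hcs := LinearMap.BilinForm.apply_sq_le_of_symm (Matrix.toBilin' M)
    (fun x => by simpa [Matrix.toBilin'_apply'] using hM.posSemidef.dotProduct_mulVec_nonneg x)
    (LinearMap.isSymm_def.2 fun x y => by
      simp only [RingHom.id_apply, Matrix.toBilin'_apply']
      rw [Matrix.dotProduct_mulVec, ← Matrix.mulVec_transpose, hMt, dotProduct_comm]) a (M⁻¹ *ᵥ v)
  simp only [Matrix.toBilin'_apply', Matrix.mulVec_mulVec,
    Matrix.mul_nonsing_inv _ hM.det_pos.ne'.isUnit, Matrix.one_mulVec] at hcs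
  rwa [dotProduct_comm, dotProduct_comm v, mul_comm]

lemma det_add_smul_vecMulVec {M : Matrix κ κ ℝ} (hM : IsUnit M.det) (t : ℝ)
    (v : κ → ℝ) :
    (M + t • Matrix.vecMulVec v v).det = M.det * (1 + t * (v ⬝ᵥ M⁻¹ *ᵥ v)) := by
  rw [← Matrix.smul_vecMulVec, Matrix.vecMulVec_eq Unit,
    Matrix.det_add_replicateCol_mul_replicateRow hM, Matrix.det_unique (n := Unit),
    Matrix.mul_assoc, ← Matrix.replicateCol_mulVec]
  simp [Matrix.replicateRow_mul_replicateCol_apply, Matrix.mulVec_smul]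

end Determinant

section InformationMatrix

variable [Fintype ι] [DecidableEq ι]

/-- The information matrix `∑ k, ν k • F k (F k)ᵀ` of the weights `ν` on the rows of `F`: the Gram
matrix of the columns of `F` for the inner product weighted by `ν`. -/
def informationMatrix (F : Matrix ι κ ℝ) (ν : ι → ℝ) : Matrix κ κ ℝ :=
  F.transpose * Matrix.diagonal ν * F

lemma informationMatrix_smul (F : Matrix ι κ ℝ) (c : ℝ) (ν : ι → ℝ) :
    informationMatrix F (c • ν) = c • informationMatrix F ν := by
  simp [informationMatrix, Matrix.diagonal_smul]

lemma informationMatrix_add_single (F : Matrix ι κ ℝ) (ν : ι → ℝ) (k : ι) (t : ℝ) :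
    informationMatrix F (ν + Pi.single k t) =
      informationMatrix F ν + t • Matrix.vecMulVec (F k) (F k) := by
  ext i j
  simp [informationMatrix, Matrix.mul_apply, Matrix.diagonal_apply, Matrix.vecMulVec_apply,
    mul_add, add_mul, Finset.sum_add_distrib, Pi.single_apply]
  ring

lemma posSemidef_informationMatrix [Finite κ] (F : Matrix ι κ ℝ) {ν : ι → ℝ} (hν : 0 ≤ ν) :
    (informationMatrix F ν).PosSemidef := by
  simpa [informationMatrix] using
    (Matrix.PosSemidef.diagonal hν).conjTranspose_mul_mul_same F

variable [Fintype κ]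

lemma dotProduct_informationMatrix_mulVec (F : Matrix ι κ ℝ) (ν : ι → ℝ) (a : κ → ℝ) :
    a ⬝ᵥ informationMatrix F ν *ᵥ a = ∑ k, ν k * (F *ᵥ a) k ^ 2 := by
  rw [informationMatrix, ← Matrix.mulVec_mulVec, ← Matrix.mulVec_mulVec, Matrix.mulVec_transpose,
    dotProduct_comm, ← Matrix.dotProduct_mulVec]
  simp only [dotProduct, Matrix.mulVec_diagonal]
  exact Finset.sum_congr rfl fun k _ => by ring

lemma posDef_informationMatrix {F : Matrix ι κ ℝ} (hF : Function.Injective F.mulVec)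
    {ν : ι → ℝ} (hν : ∀ k, 0 < ν k) : (informationMatrix F ν).PosDef := by
  simpa [informationMatrix] using
    (Matrix.PosDef.diagonal hν).conjTranspose_mul_mul_same hF

variable [DecidableEq κ]

lemma exists_isMaxOn_det_informationMatrix [Nonempty ι] {F : Matrix ι κ ℝ}
    (hF : Function.Injective F.mulVec) :
    ∃ ν ∈ stdSimplex ℝ ι, IsMaxOn (fun ν => (informationMatrix F ν).det) (stdSimplex ℝ ι) ν ∧
      (informationMatrix F ν).PosDef := by
  have hcont : Continuous fun ν => (informationMatrix F ν).det := by
    unfold informationMatrix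
    fun_prop
  have huniform : (fun _ : ι => (Fintype.card ι : ℝ)⁻¹) ∈ stdSimplex ℝ ι :=
    ⟨fun _ => by positivity, by simp⟩
  obtain ⟨ν, hν, hmax⟩ := (isCompact_stdSimplex ℝ ι).exists_isMaxOn ⟨_, huniform⟩ hcont.continuousOn
  have hpos : 0 < (informationMatrix F ν).det :=
    (posDef_informationMatrix hF fun _ => by positivity).det_pos.trans_le (hmax huniform)
  exact ⟨ν, hν, hmax, (posSemidef_informationMatrix F hν.1).posDef_iff_det_ne_zero.2 hpos.ne'⟩

/-- Moving mass towards the `k`-th point multiplies the determinant by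
`(1 + t s) / (1 + t) ^ d`, where `s` is the left-hand side; at a maximum this is at most `1`. -/
lemma dotProduct_inv_informationMatrix_mulVec_le {F : Matrix ι κ ℝ} {ν : ι → ℝ}
    (hν : ν ∈ stdSimplex ℝ ι)
    (hmax : IsMaxOn (fun ν => (informationMatrix F ν).det) (stdSimplex ℝ ι) ν)
    (hpos : (informationMatrix F ν).PosDef) (k : ι) :
    F k ⬝ᵥ (informationMatrix F ν)⁻¹ *ᵥ F k ≤ Fintype.card κ := by
  refine le_of_forall_one_add_mul_le_one_add_pow fun t ht => ?_
  have ht₁ : 0 < 1 + t := by linarith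
  have hmem : (1 + t)⁻¹ • (ν + Pi.single k t) ∈ stdSimplex ℝ ι := by
    refine ⟨fun l => ?_, ?_⟩
    · have hl : 0 ≤ ν + Pi.single k t := add_nonneg hν.1 (Pi.single_nonneg.2 ht.le)
      exact mul_nonneg (inv_nonneg.2 ht₁.le) (hl l)
    · simp [← Finset.mul_sum, Finset.sum_add_distrib, hν.2, ht₁.ne']
  have hdet := hmax hmem
  simp only [Set.mem_ofPred_eq, informationMatrix_smul, informationMatrix_add_single,
    Matrix.det_smul, det_add_smul_vecMulVec hpos.det_pos.ne'.isUnit] at hdet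
  rw [inv_pow, inv_mul_le_iff₀ (by positivity), mul_comm ((1 + t) ^ _)] at hdet
  exact le_of_mul_le_mul_left hdet hpos.det_pos

end InformationMatrix

variable [Fintype ι]

/-- The **Kiefer–Wolfowitz theorem**. -/
theorem exists_mem_stdSimplex_sq_mulVec_le [Fintype κ] [Nonempty ι] {F : Matrix ι κ ℝ}
    (hF : Function.Injective F.mulVec) :
    ∃ ν ∈ stdSimplex ℝ ι, ∀ a k,
      (F *ᵥ a) k ^ 2 ≤ Fintype.card κ * ∑ l, ν l * (F *ᵥ a) l ^ 2 := by
  classical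
  obtain ⟨ν, hν, hmax, hpos⟩ := exists_isMaxOn_det_informationMatrix hF
  refine ⟨ν, hν, fun a k => ?_⟩
  rw [← dotProduct_informationMatrix_mulVec]
  refine (sq_dotProduct_le_of_posDef hpos (F k) a).trans ?_
  gcongr
  · simpa using hpos.posSemidef.dotProduct_mulVec_nonneg a
  · exact dotProduct_inv_informationMatrix_mulVec_le hν hmax hpos k

lemma exists_weights_sq_apply_le (E : Submodule ℝ (ι → ℝ)) :
    ∃ ν : ι → ℝ, 0 ≤ ν ∧ ∑ k, ν k ≤ 1 ∧
      ∀ f ∈ E, ∀ k, f k ^ 2 ≤ Module.finrank ℝ E * ∑ l, ν l * f l ^ 2 := by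
  cases isEmpty_or_nonempty ι
  · exact ⟨0, le_rfl, by simp, fun f _ k => isEmptyElim k⟩
  let b := Module.finBasis ℝ E
  let F : Matrix ι (Fin (Module.finrank ℝ E)) ℝ := .of fun k i => (b i : ι → ℝ) k
  have hF : ∀ a, F *ᵥ a = (b.equivFun.symm a : E) := fun a => by
    ext k
    simp [F, Matrix.mulVec, dotProduct, b.equivFun_symm_apply, mul_comm]
  have hinj : Function.Injective F.mulVec := fun a a' h =>
    b.equivFun.symm.injective (Subtype.ext (by simpa only [hF] using h))
  obtain ⟨ν, hν, hle⟩ := exists_mem_stdSimplex_sq_mulVec_le hinj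
  refine ⟨ν, hν.1, hν.2.le, fun f hf k => ?_⟩
  have hle_f := hle (b.equivFun ⟨f, hf⟩) k
  simpa only [hF, LinearEquiv.symm_apply_apply, Fintype.card_fin] using hle_f

end OptimalDesign

section Kernel

variable {ι : Type*} [Fintype ι] {E : Submodule ℝ (ι → ℝ)} {ρ : ι → ℝ} {P : ι → ι → ℝ}

/-- `P` is the reproducing kernel of `E` for the inner product `∑ l, ρ l * (f l * g l)`: its
sections `P k` lie in `E` and represent the evaluations at `k`. -/
structure IsReproducingKernel (E : Submodule ℝ (ι → ℝ)) (ρ : ι → ℝ) (P : ι → ι → ℝ) : Prop where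
  mem (k : ι) : P k ∈ E
  sum_mul (f : ι → ℝ) (hf : f ∈ E) (k : ι) : ∑ l, ρ l * (P k l * f l) = f k

lemma exists_isReproducingKernel (hρ : ∀ f ∈ E, ∑ l, ρ l * f l ^ 2 = 0 → f = 0) :
    ∃ P, IsReproducingKernel E ρ P := by
  classical
  let B : LinearMap.BilinForm ℝ E := (Matrix.toBilin' (Matrix.diagonal ρ)).restrict E
  have hB : ∀ f g : E, B f g = ∑ l, ρ l * ((f : ι → ℝ) l * (g : ι → ℝ) l) := fun f g => by
    simp [B, Matrix.toBilin'_apply', dotProduct, Matrix.mulVec_diagonal, mul_left_comm]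
  have hinj : Function.Injective B := (injective_iff_map_eq_zero _).2 fun f hf => by
    refine Subtype.ext (hρ f f.2 ?_)
    simpa [hB, ← sq] using LinearMap.congr_fun hf f
  have hsurj : Function.Surjective B :=
    (LinearMap.injective_iff_surjective_of_finrank_eq_finrank
      Subspace.dual_finrank_eq.symm).1 hinj
  choose P hP using fun k : ι => hsurj (LinearMap.proj k ∘ₗ E.subtype)
  refine ⟨fun k => P k, fun k => (P k).2, fun f hf k => ?_⟩
  rw [← hB (P k) ⟨f, hf⟩, hP]
  rfl

namespace IsReproducingKernel

lemma symm (hP : IsReproducingKernel E ρ P) (k l : ι) : P k l = P l k := by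
  rw [← hP.sum_mul _ (hP.mem k) l, ← hP.sum_mul _ (hP.mem l) k]
  simp only [mul_comm]

lemma sum_mul_sq (hP : IsReproducingKernel E ρ P) (k : ι) : ∑ l, ρ l * P k l ^ 2 = P k k := by
  simpa only [sq] using hP.sum_mul _ (hP.mem k) k

lemma abs_le {d : ℝ} (hP : IsReproducingKernel E ρ P) (hd : 0 ≤ d)
    (h : ∀ f ∈ E, ∀ k, f k ^ 2 ≤ d * ∑ l, ρ l * f l ^ 2) (k l : ι) : |P k l| ≤ d := by
  have sq_le : ∀ l, P k l ^ 2 ≤ d * P k k := fun l => by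
    simpa only [hP.sum_mul_sq] using h _ (hP.mem k) l
  have diag_le : P k k ≤ d := by
    by_contra! hlt
    nlinarith [sq_le k]
  refine abs_le_of_sq_le_sq ((sq_le l).trans ?_) hd
  rw [sq]
  exact mul_le_mul_of_nonneg_left diag_le hd

lemma trace_eq [DecidableEq ι] (hP : IsReproducingKernel E ρ P) (W : (ι → ℝ) →ₗ[ℝ] ι → ℝ)
    (hW : LinearMap.range W ≤ E) :
    ∑ k, W (Pi.single k 1) k = ∑ l, ρ l * W (P l) l := by
  calc ∑ k, W (Pi.single k 1) k
      = ∑ k, ∑ l, ρ l * (P k l * W (Pi.single k 1) l) :=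
        Finset.sum_congr rfl fun k _ => (hP.sum_mul _ (hW (LinearMap.mem_range_self W _)) k).symm
    _ = ∑ l, ρ l * ∑ k, P l k * W (Pi.single k 1) l := by
        rw [Finset.sum_comm]
        simp only [Finset.mul_sum]
        exact Finset.sum_congr rfl fun l _ => Finset.sum_congr rfl fun k _ => by rw [hP.symm k l]
    _ = ∑ l, ρ l * W (P l) l := by
        refine Finset.sum_congr rfl fun l _ => ?_
        conv_rhs => rw [pi_eq_sum_univ' (P l)]
        simp

end IsReproducingKernel

lemma exists_isReproducingKernel_bounded (E : Submodule ℝ (ι → ℝ)) {w : ι → ℝ}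
    (hw₀ : 0 ≤ w) (hw₁ : ∑ k, w k ≤ 1) :
    ∃ ρ P, 0 ≤ ρ ∧ ∑ k, ρ k ≤ 2 ∧ IsReproducingKernel E ρ P ∧
      ∀ k, ‖P k‖ ≤ Module.finrank ℝ E ∧ ∑ l, w l * P k l ^ 2 ≤ Module.finrank ℝ E := by
  classical
  obtain ⟨ν, hν₀, hν₁, hν⟩ := exists_weights_sq_apply_le E
  have hρ₀ : 0 ≤ w + ν := add_nonneg hw₀ hν₀
  have sum_le : ∀ {v : ι → ℝ}, v ≤ w + ν → ∀ f : ι → ℝ,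
      ∑ l, v l * f l ^ 2 ≤ ∑ l, (w + ν) l * f l ^ 2 := fun hv f =>
    Finset.sum_le_sum fun l _ => mul_le_mul_of_nonneg_right (hv l) (sq_nonneg _)
  have sq_le : ∀ f ∈ E, ∀ k, f k ^ 2 ≤ Module.finrank ℝ E * ∑ l, (w + ν) l * f l ^ 2 :=
    fun f hf k => (hν f hf k).trans <|
      mul_le_mul_of_nonneg_left (sum_le (le_add_of_nonneg_left hw₀) f) (Nat.cast_nonneg _)
  obtain ⟨P, hP⟩ := exists_isReproducingKernel (E := E) (ρ := w + ν) fun f hf h => by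
    ext k
    have hk : f k ^ 2 ≤ 0 := by simpa only [h, mul_zero] using sq_le f hf k
    exact (pow_eq_zero_iff two_ne_zero).1 (hk.antisymm (sq_nonneg _))
  have kernel_le : ∀ k l, |P k l| ≤ Module.finrank ℝ E := hP.abs_le (Nat.cast_nonneg _) sq_le
  refine ⟨w + ν, P, hρ₀, ?_, hP, fun k => ⟨?_, ?_⟩⟩
  · simp only [Pi.add_apply, Finset.sum_add_distrib]
    linarith
  · exact (pi_norm_le_iff_of_nonneg (Nat.cast_nonneg _)).2 (kernel_le k)
  · calc ∑ l, w l * P k l ^ 2 ≤ ∑ l, (w + ν) l * P k l ^ 2 :=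
          sum_le (le_add_of_nonneg_right hν₀) _
      _ = P k k := hP.sum_mul_sq k
      _ ≤ Module.finrank ℝ E := (le_abs_self _).trans (kernel_le k k)

theorem sum_norm_apply_single_le_of_forall_norm_le [DecidableEq ι] {Y : Type*}
    [NormedAddCommGroup Y] [NormedSpace ℝ Y] (u : (ι → ℝ) →ₗ[ℝ] Y) {w : ι → ℝ} (hw₀ : 0 ≤ w)
    (hw₁ : ∑ k, w k ≤ 1) {B : ℝ}
    (hB : ∀ x : ι → ℝ, ‖x‖ ≤ Module.finrank ℝ (LinearMap.range u) →
      ∑ l, w l * x l ^ 2 ≤ Module.finrank ℝ (LinearMap.range u) → ‖u x‖ ≤ B) :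
    ∑ k, ‖u (Pi.single k 1)‖ ≤ 2 * B := by
  choose g hg_le hg using fun k => exists_dual_vector'' ℝ (u (Pi.single k 1))
  let V : Y →ₗ[ℝ] ι → ℝ := LinearMap.pi fun k => (g k : Y →ₗ[ℝ] ℝ)
  obtain ⟨ρ, P, hρ₀, hρ₁, hP, hbound⟩ :=
    exists_isReproducingKernel_bounded (LinearMap.range (V ∘ₗ u)) hw₀ hw₁
  have hrank : (Module.finrank ℝ (LinearMap.range (V ∘ₗ u)) : ℝ) ≤
      Module.finrank ℝ (LinearMap.range u) := by
    rw [LinearMap.range_comp]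
    exact_mod_cast Submodule.finrank_map_le V _
  have hB₀ : 0 ≤ B := by simpa using hB 0 (by simp) (by simp)
  calc ∑ k, ‖u (Pi.single k 1)‖ = ∑ k, (V ∘ₗ u) (Pi.single k 1) k := by simp [V, hg]
    _ = ∑ l, ρ l * g l (u (P l)) := hP.trace_eq _ le_rfl
    _ ≤ ∑ l, ρ l * B := by
        refine Finset.sum_le_sum fun l _ => mul_le_mul_of_nonneg_left ?_ (hρ₀ l)
        calc g l (u (P l)) ≤ ‖u (P l)‖ := by
              simpa using (le_abs_self _).trans ((g l).le_of_opNorm_le (hg_le l) (u (P l)))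
          _ ≤ B := hB _ ((hbound l).1.trans hrank) ((hbound l).2.trans hrank)
    _ = (∑ l, ρ l) * B := by rw [Finset.sum_mul]
    _ ≤ 2 * B := mul_le_mul_of_nonneg_right hρ₁ hB₀

end Kernel

section Domination

variable {ι Y : Type*} [NormedAddCommGroup Y] [NormedSpace ℝ Y]

lemma mul_rpow_sub_one_mul_le {r a b : ℝ} (hr : 1 < r) (ha : 0 ≤ a) (hb : 0 ≤ b) :
    r * (b ^ (r - 1) * a) ≤ a ^ r + (r - 1) * b ^ r := by
  have hr₀ : r - 1 ≠ 0 := by linarith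
  have hyoung := Real.young_inequality_of_nonneg ha (Real.rpow_nonneg hb (r - 1))
    (Real.HolderConjugate.conjExponent hr)
  have hpow : (b ^ (r - 1)) ^ (r / (r - 1)) = b ^ r := by
    rw [← Real.rpow_mul hb, mul_div_cancel₀ _ hr₀]
  rw [Real.conjExponent, hpow] at hyoung
  calc r * (b ^ (r - 1) * a) = r * (a * b ^ (r - 1)) := by ring
    _ ≤ r * (a ^ r / r + b ^ r / (r / (r - 1))) := by gcongr
    _ = a ^ r + (r - 1) * b ^ r := by field_simp

/-- The linear map `u` on the functions `ι → ℝ` (for finite `ι`, the space `ℓ_∞` over `ι`) is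
`(r, 1)`-summing with constant `C`: a family `z` has weak `ℓ_1`-norm at most `1` in `ℓ_∞` exactly
when `∑ i, |z i|` is pointwise at most `1`. -/
def IsSummingOnFun (u : (ι → ℝ) →ₗ[ℝ] Y) (r C : ℝ) : Prop :=
  ∀ ⦃N : ℕ⦄ (z : Fin N → ι → ℝ), ∑ i, |z i| ≤ 1 → ∑ i, ‖u (z i)‖ ^ r ≤ C ^ r

/-- The functional is the gradient at `a = 1` of `a ↦ r⁻¹ * ∑ i, ‖u (a * z i)‖ ^ r`, built from
functionals norming the vectors `u (z i)`. -/
lemma exists_linearMap_le_sum_norm_mul_rpow (u : (ι → ℝ) →ₗ[ℝ] Y) {r : ℝ} (hr : 1 < r) {N : ℕ}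
    (z : Fin N → ι → ℝ) :
    ∃ φ : (ι → ℝ) →ₗ[ℝ] ℝ, φ 1 = ∑ i, ‖u (z i)‖ ^ r ∧
      ∀ a, r * φ a ≤ ∑ i, ‖u (a * z i)‖ ^ r + (r - 1) * ∑ i, ‖u (z i)‖ ^ r := by
  choose g hg_le hg using fun i => exists_dual_vector'' ℝ (u (z i))
  let φ : (ι → ℝ) →ₗ[ℝ] ℝ := ∑ i, ‖u (z i)‖ ^ (r - 1) •
    ((g i : Y →ₗ[ℝ] ℝ) ∘ₗ u ∘ₗ LinearMap.mulRight ℝ (z i))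
  have hφ : ∀ a, φ a = ∑ i, ‖u (z i)‖ ^ (r - 1) * g i (u (a * z i)) := fun a => by
    simp [φ, LinearMap.sum_apply]
  refine ⟨φ, ?_, fun a => ?_⟩
  · rw [hφ]
    refine Finset.sum_congr rfl fun i _ => ?_
    rw [one_mul, hg, RCLike.ofReal_real_eq_id, id,
      ← Real.rpow_add_one' (norm_nonneg _) (by linarith), sub_add_cancel]
  · rw [hφ, Finset.mul_sum, Finset.mul_sum, ← Finset.sum_add_distrib]
    refine Finset.sum_le_sum fun i _ => le_trans ?_
      (mul_rpow_sub_one_mul_le hr (norm_nonneg (u (a * z i))) (norm_nonneg (u (z i))))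
    have hgi : g i (u (a * z i)) ≤ ‖u (a * z i)‖ := by
      simpa using (le_abs_self _).trans ((g i).le_of_opNorm_le (hg_le i) (u (a * z i)))
    gcongr

lemma exists_linearMap_rpow_le_add {u : (ι → ℝ) →ₗ[ℝ] Y} {r C : ℝ} (hr : 1 < r)
    (hu : IsSummingOnFun u r C) {δ : ℝ} (hδ : 0 < δ) :
    ∃ φ : (ι → ℝ) →ₗ[ℝ] ℝ, (∀ a, |a| ≤ 1 → φ a ≤ C ^ r) ∧
      ∀ x, |x| ≤ 1 → ‖u x‖ ^ r ≤ δ + r * φ |x| := by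
  let S : Set ℝ := {s | ∃ (N : ℕ) (z : Fin N → ι → ℝ), ∑ i, |z i| ≤ 1 ∧ ∑ i, ‖u (z i)‖ ^ r = s}
  have hS : ∀ s ∈ S, s ≤ C ^ r := by
    rintro _ ⟨N, z, hz, rfl⟩
    exact hu z hz
  have hS_ne : S.Nonempty := ⟨_, 0, Fin.elim0, by simp, rfl⟩
  have le_sSup : ∀ {N : ℕ} (z : Fin N → ι → ℝ), ∑ i, |z i| ≤ 1 → ∑ i, ‖u (z i)‖ ^ r ≤ sSup S :=
    fun z hz => le_csSup ⟨_, hS⟩ ⟨_, z, hz, rfl⟩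
  obtain ⟨_, ⟨N, z, hz, rfl⟩, hlt⟩ := exists_lt_of_lt_csSup hS_ne (sub_lt_self (sSup S) hδ)
  obtain ⟨φ, hφ₁, hφ⟩ := exists_linearMap_le_sum_norm_mul_rpow u hr z
  have sum_abs_mul : ∀ a, ∑ i, |a * z i| ≤ |a| := fun a k => by
    simp only [Finset.sum_apply, Pi.abs_apply, Pi.mul_apply, abs_mul, ← Finset.mul_sum]
    exact mul_le_of_le_one_right (abs_nonneg _) (by simpa using hz k)
  refine ⟨φ, fun a ha => ?_, fun x hx => ?_⟩
  · have hσ := le_sSup z hz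
    have ha' := le_sSup (fun i => a * z i) ((sum_abs_mul a).trans ha)
    have : r * φ a ≤ r * sSup S := by nlinarith [hφ a]
    exact (le_of_mul_le_mul_left this (by linarith)).trans (csSup_le hS_ne hS)
  · have hz_sub := sum_abs_mul (1 - |x|)
    rw [abs_of_nonneg (sub_nonneg.2 hx)] at hz_sub
    have hcons := le_sSup (Fin.cons x fun i => (1 - |x|) * z i) (by
      simpa only [Fin.sum_univ_succ, Fin.cons_zero, Fin.cons_succ] using
        (add_le_add_right hz_sub |x|).trans_eq (add_sub_cancel _ _))
    simp only [Fin.sum_univ_succ, Fin.cons_zero, Fin.cons_succ] at hcons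
    have hsub := hφ (1 - |x|)
    rw [map_sub, hφ₁] at hsub
    linarith

variable [Fintype ι]

lemma exists_weights_rpow_le_add {u : (ι → ℝ) →ₗ[ℝ] Y} {r C : ℝ} (hr : 1 < r)
    (hu : IsSummingOnFun u r C) {δ : ℝ} (hδ : 0 < δ) :
    ∃ p : ι → ℝ, 0 ≤ p ∧ ∑ k, p k ≤ C ^ r ∧
      ∀ x, |x| ≤ 1 → ‖u x‖ ^ r ≤ δ + r * ∑ k, p k * |x k| := by
  classical
  obtain ⟨φ, hφ, hle⟩ := exists_linearMap_rpow_le_add hr hu hδ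
  let q : ι → ℝ := fun k => φ (Pi.single k 1)
  have hφq : ∀ a, φ a = ∑ k, q k * a k := fun a => by
    conv_lhs => rw [pi_eq_sum_univ' a]
    simp [q, mul_comm]
  refine ⟨|q|, abs_nonneg q, ?_, fun x hx => (hle x hx).trans ?_⟩
  · have hsign : |fun k => (SignType.sign (q k) : ℝ)| ≤ 1 := fun k => by
      rw [Pi.abs_apply]
      rcases SignType.sign (q k) <;> simp
    simpa only [hφq, self_mul_sign, Pi.abs_apply] using hφ _ hsign
  · simp only [hφq, Pi.abs_apply]
    gcongr with k
    exact le_abs_self (q k)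

theorem IsSummingOnFun.exists_weights_rpow_le {u : (ι → ℝ) →ₗ[ℝ] Y} {r C : ℝ} (hr : 1 < r)
    (hu : IsSummingOnFun u r C) :
    ∃ w : ι → ℝ, 0 ≤ w ∧ ∑ k, w k ≤ 1 ∧
      ∀ x, |x| ≤ 1 → ‖u x‖ ^ r ≤ r * C ^ r * ∑ k, w k * |x k| := by
  choose p hp₀ hp₁ hp using fun n : ℕ =>
    exists_weights_rpow_le_add hr hu (Nat.one_div_pos_of_nat (n := n) (α := ℝ))
  have hmem : ∀ n, p n ∈ Set.Icc 0 fun _ => C ^ r := fun n =>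
    ⟨hp₀ n, fun k => (Finset.single_le_sum (fun l _ => hp₀ n l) (Finset.mem_univ k)).trans (hp₁ n)⟩
  obtain ⟨p', hp', τ, hτ, hlim⟩ := isCompact_Icc.tendsto_subseq hmem
  have hlim_apply : ∀ k, Filter.Tendsto (fun n => p (τ n) k) Filter.atTop (nhds (p' k)) :=
    tendsto_pi_nhds.1 hlim
  have hsum : ∑ k, p' k ≤ C ^ r :=
    le_of_tendsto' (tendsto_finsetSum _ fun k _ => hlim_apply k) fun n => hp₁ (τ n)
  have hbound : ∀ x, |x| ≤ 1 → ‖u x‖ ^ r ≤ r * ∑ k, p' k * |x k| := fun x hx => by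
    have hδ := (tendsto_one_div_add_atTop_nhds_zero_nat (𝕜 := ℝ)).comp hτ.tendsto_atTop
    have hlim_bound := hδ.add ((tendsto_finsetSum Finset.univ fun k _ =>
      (hlim_apply k).mul_const |x k|).const_mul r)
    rw [zero_add] at hlim_bound
    exact ge_of_tendsto' hlim_bound fun n => hp (τ n) x hx
  have hC : 0 ≤ C ^ r := (Finset.sum_nonneg fun k _ => hp'.1 k).trans hsum
  have hscale : ∀ k, C ^ r * (p' k / C ^ r) = p' k := fun k =>
    mul_div_cancel_of_imp' fun h => le_antisymm (h ▸ hp'.2 k) (hp'.1 k)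
  refine ⟨fun k => p' k / C ^ r, fun k => div_nonneg (hp'.1 k) hC, ?_, fun x hx => ?_⟩
  · rw [← Finset.sum_div]
    exact div_le_one_of_le₀ hsum hC
  · rw [mul_assoc, Finset.mul_sum]
    simpa only [← mul_assoc (C ^ r), hscale] using hbound x hx

end Domination

section Interpolation

variable {ι Y : Type*} [Fintype ι] [NormedAddCommGroup Y] [NormedSpace ℝ Y]
  {u : (ι → ℝ) →ₗ[ℝ] Y} {w : ι → ℝ} {A r r' : ℝ}

lemma two_rpow_neg_le {τ : ℝ} (hτ₀ : 0 ≤ τ) (hτ₁ : τ ≤ 1) : (2 : ℝ) ^ (-τ) ≤ 1 - τ / 2 := by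
  have hbernoulli := rpow_one_add_le_one_add_mul_self (s := -(1 / 2 : ℝ)) (by norm_num) hτ₀ hτ₁
  rw [Real.rpow_neg two_pos.le, ← Real.inv_rpow two_pos.le]
  norm_num at hbernoulli ⊢
  linarith

lemma sum_two_pow_rpow_le (hr : 2 < r) (hrr : r.HolderConjugate r') (J : ℕ) :
    ∑ j ∈ Finset.range J, (((2 : ℝ) ^ j) ^ (-(1 - 2 / r))) ^ r' ≤ (1 / 2 - 1 / r)⁻¹ := by
  have hgap : 0 < 1 / 2 - 1 / r := sub_pos.2 (one_div_lt_one_div_of_lt two_pos hr)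
  have hr' : 1 < r' := hrr.symm.lt
  set τ := (1 - 2 / r) * r' with hτ
  have hτ_gap : 1 / 2 - 1 / r ≤ τ / 2 := by
    calc 1 / 2 - 1 / r ≤ (1 / 2 - 1 / r) * r' := le_mul_of_one_le_right hgap.le hr'.le
      _ = τ / 2 := by ring
  have hτ_le : τ ≤ 1 := by
    calc τ = (1 - r⁻¹) * r' - r' / r := by ring
      _ = 1 - r' / r := by rw [hrr.one_sub_inv, inv_mul_cancel₀ hrr.symm.ne_zero]
      _ ≤ 1 := sub_le_self _ (by positivity)
  have hle : (2 : ℝ) ^ (-τ) ≤ 1 - τ / 2 := two_rpow_neg_le (by linarith) hτ_le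
  have hterm : ∀ j : ℕ, (((2 : ℝ) ^ j) ^ (-(1 - 2 / r))) ^ r' = ((2 : ℝ) ^ (-τ)) ^ j := fun j => by
    rw [← Real.rpow_mul (by positivity), neg_mul, ← hτ, Real.rpow_pow_comm two_pos.le]
  calc ∑ j ∈ Finset.range J, (((2 : ℝ) ^ j) ^ (-(1 - 2 / r))) ^ r'
      = ∑ j ∈ Finset.range J, ((2 : ℝ) ^ (-τ)) ^ j := Finset.sum_congr rfl fun j _ => hterm j
    _ ≤ (1 - (2 : ℝ) ^ (-τ))⁻¹ :=
        sum_le_hasSum _ (fun j _ => by positivity)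
          (hasSum_geometric_of_lt_one (by positivity) (by linarith))
    _ ≤ (1 / 2 - 1 / r)⁻¹ := inv_anti₀ hgap (by linarith)

lemma exists_two_pow_mul_abs_le {a : ℝ} (ha : |a| ≤ 1) :
    ∃ j : ℕ, 2 ^ j * |a| ≤ 1 ∧ 2 ^ j * |a| ≤ 2 * (2 ^ j * |a|) ^ 2 := by
  obtain rfl | hne := eq_or_ne a 0
  · exact ⟨0, by simp⟩
  obtain ⟨j, hlt, hle⟩ := exists_nat_pow_near_of_lt_one (abs_pos.2 hne) ha
    (y := (1 / 2 : ℝ)) (by norm_num) (by norm_num)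
  have hscale : (2 : ℝ) ^ j * (1 / 2) ^ j = 1 := by
    rw [← mul_pow]
    norm_num
  have hlower : 1 / 2 < 2 ^ j * |a| := by
    calc (1 / 2 : ℝ) = 2 ^ j * (1 / 2) ^ (j + 1) := by rw [pow_succ, ← mul_assoc, hscale, one_mul]
      _ < 2 ^ j * |a| := by gcongr
  have hupper : 2 ^ j * |a| ≤ 1 := by
    calc 2 ^ j * |a| ≤ 2 ^ j * (1 / 2) ^ j := by gcongr
      _ = 1 := hscale
  exact ⟨j, hupper, by nlinarith⟩

lemma norm_le_of_abs_le_two_mul_sq (hr : 0 < r) (hA : 0 ≤ A) (hw : 0 ≤ w)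
    (hu : ∀ x, |x| ≤ 1 → ‖u x‖ ^ r ≤ A * ∑ k, w k * |x k|) {t : ℝ} (ht : 0 < t) {x : ι → ℝ}
    (hle : ∀ k, t * |x k| ≤ 1) (hsq : ∀ k, t * |x k| ≤ 2 * (t * |x k|) ^ 2) :
    ‖u x‖ ≤ t ^ (-(1 - 2 / r)) * (2 * A * ∑ k, w k * x k ^ 2) ^ (1 / r) := by
  have hS : 0 ≤ 2 * A * ∑ k, w k * x k ^ 2 :=
    mul_nonneg (by positivity) (Finset.sum_nonneg fun k _ => mul_nonneg (hw k) (sq_nonneg _))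
  have habs : ∀ k, |(t • x) k| = t * |x k| := fun k => by simp [abs_mul, abs_of_pos ht]
  have hpow : (t * ‖u x‖) ^ r ≤ t ^ 2 * (2 * A * ∑ k, w k * x k ^ 2) := by
    calc (t * ‖u x‖) ^ r = ‖u (t • x)‖ ^ r := by
          rw [map_smul, norm_smul, Real.norm_of_nonneg ht.le]
      _ ≤ A * ∑ k, w k * |(t • x) k| := hu _ fun k => (habs k).trans_le (hle k)
      _ ≤ A * ∑ k, w k * (2 * (t * |x k|) ^ 2) := by
          gcongr with k
          · exact hw k
          · exact (habs k).trans_le (hsq k)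
      _ = t ^ 2 * (2 * A * ∑ k, w k * x k ^ 2) := by
          simp only [Finset.mul_sum, mul_pow, sq_abs]
          exact Finset.sum_congr rfl fun k _ => by ring
  have hroot : t * ‖u x‖ ≤ (t ^ 2) ^ (1 / r) * (2 * A * ∑ k, w k * x k ^ 2) ^ (1 / r) := by
    rw [← Real.mul_rpow (by positivity) hS, one_div]
    exact (Real.le_rpow_inv_iff_of_pos (by positivity) (by positivity) hr).2 hpow
  have hscale : (t ^ 2) ^ (1 / r) = t * t ^ (-(1 - 2 / r)) := by
    rw [← Real.rpow_two, ← Real.rpow_mul ht.le, mul_comm t, ← Real.rpow_add_one ht.ne']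
    ring_nf
  rw [hscale, mul_assoc] at hroot
  exact le_of_mul_le_mul_left hroot ht

lemma sum_two_pow_rpow_mul_rpow_le (hr : 2 < r) (hrr : r.HolderConjugate r') {S : ℕ → ℝ}
    (hS : 0 ≤ S) (J : ℕ) :
    ∑ j ∈ Finset.range J, ((2 : ℝ) ^ j) ^ (-(1 - 2 / r)) * S j ^ (1 / r) ≤
      (1 / 2 - 1 / r) ^ (-(1 / r')) * (∑ j ∈ Finset.range J, S j) ^ (1 / r) := by
  have hgap : 0 < 1 / 2 - 1 / r := sub_pos.2 (one_div_lt_one_div_of_lt two_pos hr)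
  have hroot : ∀ j, (S j ^ (1 / r)) ^ r = S j := fun j => by
    rw [one_div, Real.rpow_inv_rpow (hS j) (by linarith)]
  calc ∑ j ∈ Finset.range J, ((2 : ℝ) ^ j) ^ (-(1 - 2 / r)) * S j ^ (1 / r)
      ≤ (∑ j ∈ Finset.range J, (((2 : ℝ) ^ j) ^ (-(1 - 2 / r))) ^ r') ^ (1 / r') *
          (∑ j ∈ Finset.range J, (S j ^ (1 / r)) ^ r) ^ (1 / r) :=
        Real.inner_le_Lp_mul_Lq_of_nonneg _ hrr.symm (fun j _ => by positivity)
          fun j _ => Real.rpow_nonneg (hS j) _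
    _ ≤ ((1 / 2 - 1 / r)⁻¹) ^ (1 / r') * (∑ j ∈ Finset.range J, S j) ^ (1 / r) := by
        simp only [hroot]
        refine mul_le_mul_of_nonneg_right ?_ (Real.rpow_nonneg (Finset.sum_nonneg' hS) _)
        exact Real.rpow_le_rpow (Finset.sum_nonneg fun j _ => by positivity)
          (sum_two_pow_rpow_le hr hrr J) hrr.symm.one_div_nonneg
    _ = (1 / 2 - 1 / r) ^ (-(1 / r')) * (∑ j ∈ Finset.range J, S j) ^ (1 / r) := by
        rw [Real.rpow_neg hgap.le, Real.inv_rpow hgap.le]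

lemma norm_le_rpow_of_abs_le_one (hr : 2 < r) (hrr : r.HolderConjugate r') (hA : 0 ≤ A)
    (hw : 0 ≤ w) (hu : ∀ x, |x| ≤ 1 → ‖u x‖ ^ r ≤ A * ∑ k, w k * |x k|) {x : ι → ℝ}
    (hx : |x| ≤ 1) :
    ‖u x‖ ≤ (1 / 2 - 1 / r) ^ (-(1 / r')) * (2 * A * ∑ k, w k * x k ^ 2) ^ (1 / r) := by
  choose level hlevel_le hlevel_sq using fun k => exists_two_pow_mul_abs_le (hx k)
  let J := Finset.univ.sup level + 1
  have hJ : ∀ k, level k ∈ Finset.range J := fun k =>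
    Finset.mem_range.2 (Nat.lt_succ_of_le (Finset.le_sup (Finset.mem_univ k)))
  let piece : ℕ → ι → ℝ := fun j k => if j = level k then x k else 0
  let S : ℕ → ℝ := fun j => 2 * A * ∑ k, w k * piece j k ^ 2
  have hS : ∀ j, 0 ≤ S j := fun j =>
    mul_nonneg (by positivity) (Finset.sum_nonneg fun k _ => mul_nonneg (hw k) (sq_nonneg _))
  have sum_piece : x = ∑ j ∈ Finset.range J, piece j := by
    ext k
    simp [piece, hJ k, -Finset.mem_range]
  have sum_S : ∑ j ∈ Finset.range J, S j = 2 * A * ∑ k, w k * x k ^ 2 := by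
    simp only [S, ← Finset.mul_sum]
    rw [Finset.sum_comm]
    simp [piece, ite_pow, hJ, -Finset.mem_range]
  have norm_piece : ∀ j, ‖u (piece j)‖ ≤ ((2 : ℝ) ^ j) ^ (-(1 - 2 / r)) * S j ^ (1 / r) := fun j =>
    norm_le_of_abs_le_two_mul_sq (by linarith) hA hw hu (by positivity)
      (fun k => by by_cases h : j = level k <;> simp [piece, h, hlevel_le])
      (fun k => by by_cases h : j = level k <;> simp [piece, h, hlevel_sq])
  calc ‖u x‖ ≤ ∑ j ∈ Finset.range J, ‖u (piece j)‖ := by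
        conv_lhs => rw [sum_piece, map_sum]
        exact norm_sum_le _ _
    _ ≤ ∑ j ∈ Finset.range J, ((2 : ℝ) ^ j) ^ (-(1 - 2 / r)) * S j ^ (1 / r) :=
        Finset.sum_le_sum fun j _ => norm_piece j
    _ ≤ (1 / 2 - 1 / r) ^ (-(1 / r')) * (2 * A * ∑ k, w k * x k ^ 2) ^ (1 / r) := by
        rw [← sum_S]
        exact sum_two_pow_rpow_mul_rpow_le hr hrr hS J

theorem norm_le_mul_rpow_mul_norm_rpow (hr : 2 < r) (hrr : r.HolderConjugate r') (hA : 0 ≤ A)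
    (hw : 0 ≤ w) (hu : ∀ x, |x| ≤ 1 → ‖u x‖ ^ r ≤ A * ∑ k, w k * |x k|) (x : ι → ℝ) :
    ‖u x‖ ≤ (1 / 2 - 1 / r) ^ (-(1 / r')) * (2 * A * ∑ k, w k * x k ^ 2) ^ (1 / r) *
      ‖x‖ ^ (1 - 2 / r) := by
  obtain rfl | hx := eq_or_ne x 0
  · have hexp : 1 - 2 / r ≠ 0 := (sub_pos.2 ((div_lt_one (by linarith)).2 hr)).ne'
    simp [Real.zero_rpow hexp]
  have hx₀ : 0 < ‖x‖ := norm_pos_iff.2 hx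
  have hS : 0 ≤ 2 * A * ∑ k, w k * x k ^ 2 :=
    mul_nonneg (by positivity) (Finset.sum_nonneg fun k _ => mul_nonneg (hw k) (sq_nonneg _))
  have hunit := norm_le_rpow_of_abs_le_one hr hrr hA hw hu (x := ‖x‖⁻¹ • x) fun k => by
    simpa [abs_mul, inv_mul_le_iff₀ hx₀] using norm_le_pi_norm x k
  have hsum : 2 * A * ∑ k, w k * (‖x‖⁻¹ • x) k ^ 2 =
      ‖x‖ ^ (-2 : ℝ) * (2 * A * ∑ k, w k * x k ^ 2) := by
    rw [Real.rpow_neg hx₀.le, Real.rpow_two]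
    simp only [Pi.smul_apply, smul_eq_mul, mul_pow, inv_pow, Finset.mul_sum]
    exact Finset.sum_congr rfl fun k _ => by ring
  rw [map_smul, norm_smul, norm_inv, norm_norm, inv_mul_le_iff₀ hx₀, hsum,
    Real.mul_rpow (by positivity) hS, ← Real.rpow_mul hx₀.le] at hunit
  have hscale : ‖x‖ ^ (1 - 2 / r) = ‖x‖ * ‖x‖ ^ (-2 * (1 / r)) := by
    rw [mul_comm, ← Real.rpow_add_one hx₀.ne']
    ring_nf
  rw [hscale]
  linarith

end Interpolation

lemma two_mul_le_two_rpow {r : ℝ} (hr : 2 ≤ r) : 2 * r ≤ 2 ^ r := by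
  have hbernoulli := one_add_mul_self_le_rpow_one_add (s := 1) (p := r - 1) (by norm_num)
    (by linarith)
  have hsucc : (2 : ℝ) ^ r = 2 ^ (r - 1) * 2 := by
    rw [← Real.rpow_add_one two_ne_zero, sub_add_cancel]
  norm_num at hbernoulli
  linarith

theorem IsSummingOnFun.sum_norm_apply_single_le {ι Y : Type*} [Fintype ι] [DecidableEq ι]
    [NormedAddCommGroup Y] [NormedSpace ℝ Y] {u : (ι → ℝ) →ₗ[ℝ] Y} {r r' C : ℝ} (hr : 2 < r)
    (hrr : r.HolderConjugate r') (hC : 0 ≤ C) (hu : IsSummingOnFun u r C) :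
    ∑ k, ‖u (Pi.single k 1)‖ ≤ 4 * (1 / 2 - 1 / r) ^ (-(1 / r')) *
      (Module.finrank ℝ (LinearMap.range u) : ℝ) ^ (1 / r') * C := by
  have hr₀ : 0 < r := by linarith
  have hgap : 0 < 1 / 2 - 1 / r := sub_pos.2 (one_div_lt_one_div_of_lt two_pos hr)
  obtain ⟨w, hw₀, hw₁, hw⟩ := hu.exists_weights_rpow_le (by linarith)
  set β := (1 / 2 - 1 / r) ^ (-(1 / r'))
  set d : ℝ := (Module.finrank ℝ (LinearMap.range u) : ℝ)
  have hd₀ : 0 ≤ d := Nat.cast_nonneg _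
  have hA : 2 * (r * C ^ r) ≤ (2 * C) ^ r := by
    rw [Real.mul_rpow two_pos.le hC, ← mul_assoc]
    gcongr
    exact two_mul_le_two_rpow hr.le
  have hexp₀ : 0 ≤ 1 - 2 / r := sub_nonneg.2 ((div_le_one hr₀).2 hr.le)
  have hexp : d ^ (1 / r) * d ^ (1 - 2 / r) = d ^ (1 / r') := by
    rw [← Real.rpow_add_of_nonneg hd₀ (by positivity) hexp₀, one_div r', ← hrr.one_sub_inv]
    ring_nf
  refine (sum_norm_apply_single_le_of_forall_norm_le u hw₀ hw₁
    (B := β * (2 * C * d ^ (1 / r)) * d ^ (1 - 2 / r)) fun x hx hxw => ?_).trans_eq ?_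
  · have hS : 0 ≤ ∑ k, w k * x k ^ 2 :=
      Finset.sum_nonneg fun k _ => mul_nonneg (hw₀ k) (sq_nonneg _)
    calc ‖u x‖ ≤ β * (2 * (r * C ^ r) * ∑ k, w k * x k ^ 2) ^ (1 / r) * ‖x‖ ^ (1 - 2 / r) :=
          norm_le_mul_rpow_mul_norm_rpow hr hrr (by positivity) hw₀ hw x
      _ ≤ β * ((2 * C) ^ r * d) ^ (1 / r) * d ^ (1 - 2 / r) := by gcongr
      _ = β * (2 * C * d ^ (1 / r)) * d ^ (1 - 2 / r) := by
          rw [Real.mul_rpow (by positivity) hd₀, one_div,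
            Real.rpow_rpow_inv (by positivity) hr₀.ne']
  · rw [← hexp]
    ring

section SummingNorm

variable {X Y : Type*} [NormedAddCommGroup X] [NormedSpace ℝ X] [NormedAddCommGroup Y]
  [NormedSpace ℝ Y]

lemma eSum_ofReal_le_ofReal_iff {ι : Type*} [Fintype ι] {p C : ℝ} {a : ι → ℝ} (hp : 0 < p)
    (ha : 0 ≤ a) (hC : 0 ≤ C) :
    eSum (.ofReal p) (fun i => .ofReal (a i)) ≤ .ofReal C ↔ ∑ i, a i ^ p ≤ C ^ p := by
  have hpow : ∀ i, ENNReal.ofReal (a i) ^ p = .ofReal (a i ^ p) := fun i =>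
    ENNReal.ofReal_rpow_of_nonneg (ha i) hp.le
  rw [eSum, if_neg ENNReal.ofReal_ne_top, ENNReal.toReal_ofReal hp.le, one_div,
    ENNReal.rpow_inv_le_iff hp, ENNReal.ofReal_rpow_of_nonneg hC hp.le]
  simp only [hpow]
  rw [← ENNReal.ofReal_sum_of_nonneg fun i _ => Real.rpow_nonneg (ha i) p,
    ENNReal.ofReal_le_ofReal_iff (Real.rpow_nonneg hC p)]

lemma weakLq_one_le_one_iff {n : ℕ} {x : Fin n → X} :
    weakLq 1 x ≤ 1 ↔ ∀ f : X →L[ℝ] ℝ, ‖f‖ ≤ 1 → ∑ k, |f (x k)| ≤ 1 := by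
  have heSum : ∀ f : X →L[ℝ] ℝ, eSum 1 (fun k => .ofReal |f (x k)|) ≤ 1 ↔ ∑ k, |f (x k)| ≤ 1 :=
    fun f => by
      simpa using eSum_ofReal_le_ofReal_iff one_pos (fun k => abs_nonneg (f (x k))) zero_le_one
  simp only [weakLq, iSup_le_iff, heSum, Subtype.forall]

lemma weakLq_one_sum_smul_le_one {m n : ℕ} {x : Fin n → X} (hx : weakLq 1 x ≤ 1)
    {z : Fin m → Fin n → ℝ} (hz : ∑ i, |z i| ≤ 1) : weakLq 1 (fun i => ∑ k, z i k • x k) ≤ 1 := by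
  rw [weakLq_one_le_one_iff] at hx ⊢
  intro f hf
  calc ∑ i, |f (∑ k, z i k • x k)| ≤ ∑ i, ∑ k, |z i k| * |f (x k)| := by
        gcongr with i
        simpa only [map_sum, map_smul, smul_eq_mul, abs_mul] using
          Finset.abs_sum_le_sum_abs (fun k => z i k * f (x k)) Finset.univ
    _ = ∑ k, (∑ i, |z i k|) * |f (x k)| := by
        rw [Finset.sum_comm]
        simp only [Finset.sum_mul]
    _ ≤ ∑ k, |f (x k)| := Finset.sum_le_sum fun k _ =>
        mul_le_of_le_one_left (abs_nonneg _) (by simpa using hz k)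
    _ ≤ 1 := hx f hf

lemma sum_norm_rpow_le_piPQ {p : ℝ} {q : ℝ≥0∞} {T : X →L[ℝ] Y} (hp : 0 < p)
    (hT : piPQ (.ofReal p) q T ≠ ∞) {n : ℕ} {x : Fin n → X} (hx : weakLq q x ≤ 1) :
    ∑ k, ‖T (x k)‖ ^ p ≤ (piPQ (.ofReal p) q T).toReal ^ p := by
  refine (eSum_ofReal_le_ofReal_iff hp (fun k => norm_nonneg _) ENNReal.toReal_nonneg).1 ?_
  rw [ENNReal.ofReal_toReal hT]
  exact (le_iSup (fun x : {x : Fin n → X // weakLq q x ≤ 1} =>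
    eSum (.ofReal p) fun k => .ofReal ‖T (x.1 k)‖) ⟨x, hx⟩).trans (le_iSup (piN _ q · T) n)

lemma piPQ_one_le_ofReal {q : ℝ≥0∞} {T : X →L[ℝ] Y} {C : ℝ} (hC : 0 ≤ C)
    (h : ∀ (n : ℕ) (x : Fin n → X), weakLq q x ≤ 1 → ∑ k, ‖T (x k)‖ ≤ C) :
    piPQ 1 q T ≤ .ofReal C := by
  refine iSup_le fun n => iSup_le fun x => ?_
  simpa using (eSum_ofReal_le_ofReal_iff one_pos (fun k => norm_nonneg (T (x.1 k))) hC).2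
    (by simpa using h n x x.2)

lemma isSummingOnFun_comp_linearCombination {r : ℝ} {T : X →L[ℝ] Y} (hr : 0 < r)
    (hT : piPQ (.ofReal r) 1 T ≠ ∞) {n : ℕ} {x : Fin n → X} (hx : weakLq 1 x ≤ 1) :
    IsSummingOnFun ((T : X →ₗ[ℝ] Y) ∘ₗ Fintype.linearCombination ℝ x) r
      (piPQ (.ofReal r) 1 T).toReal := fun _ _ hz =>
  sum_norm_rpow_le_piPQ hr hT (weakLq_one_sum_smul_le_one hx hz)

theorem statement10_general {r r' : ℝ} (hr : 2 < r) (hrr : r.HolderConjugate r') {n : ℕ}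
    {T : X →L[ℝ] Y} (hT : RankLE T n) (hfin : piPQ (.ofReal r) 1 T < ∞) :
    piPQ 1 1 T ≤ .ofReal (4 * (1 / 2 - 1 / r) ^ (-(1 / r')) * (n : ℝ) ^ (1 / r')) *
      piPQ (.ofReal r) 1 T := by
  have hgap : 0 < 1 / 2 - 1 / r := sub_pos.2 (one_div_lt_one_div_of_lt two_pos hr)
  rw [← ENNReal.ofReal_toReal hfin.ne, ← ENNReal.ofReal_mul (by positivity)]
  refine piPQ_one_le_ofReal (by positivity) fun m x hx => ?_
  set u := (T : X →ₗ[ℝ] Y) ∘ₗ Fintype.linearCombination ℝ x with hu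
  have hrank : Module.finrank ℝ (LinearMap.range u) ≤ n := by
    have := hT.1
    exact (Submodule.finrank_mono (LinearMap.range_comp_le_range _ _)).trans hT.2
  calc ∑ k, ‖T (x k)‖ = ∑ k, ‖u (Pi.single k 1)‖ := by
        simp [hu, Fintype.linearCombination_apply_single]
    _ ≤ 4 * (1 / 2 - 1 / r) ^ (-(1 / r')) *
          (Module.finrank ℝ (LinearMap.range u) : ℝ) ^ (1 / r') *
          (piPQ (.ofReal r) 1 T).toReal :=
        (isSummingOnFun_comp_linearCombination (by linarith) hfin.ne hx).sum_norm_apply_single_le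
          hr hrr ENNReal.toReal_nonneg
    _ ≤ 4 * (1 / 2 - 1 / r) ^ (-(1 / r')) * (n : ℝ) ^ (1 / r') *
          (piPQ (.ofReal r) 1 T).toReal := by
        have := hrr.symm.pos
        gcongr

end SummingNorm

/-- there is an absolute constant `c₀` such that for `2 < r < ∞`
with conjugate exponent `r'` and any absolutely `(r,1)`-summing operator `T` of
rank at most `n`, `π_1(T) ≤ c₀ (1/2 - 1/r)^{-1/r'} n^{1/r'} π_{r,1}(T)`. -/
theorem statement10 :
    ∃ c₀ : ℝ, 0 < c₀ ∧
      ∀ (r r' : ℝ), 2 < r → 1 / r + 1 / r' = 1 →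
        ∀ (n : ℕ) (X Y : Type*) [NormedAddCommGroup X] [NormedSpace ℝ X] [CompleteSpace X]
          [NormedAddCommGroup Y] [NormedSpace ℝ Y] [CompleteSpace Y]
          (T : X →L[ℝ] Y), RankLE T n → piPQ (ENNReal.ofReal r) 1 T < ∞ →
          piPQ 1 1 T ≤
            ENNReal.ofReal (c₀ * (1 / 2 - 1 / r) ^ (-(1 / r')) * (n : ℝ) ^ (1 / r')) *
              piPQ (ENNReal.ofReal r) 1 T := by
  refine ⟨4, by norm_num, fun r r' hr hrr n X Y _ _ _ _ _ _ T hT hfin => ?_⟩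
  have hconj : r.HolderConjugate r' :=
    Real.holderConjugate_iff.2 ⟨by linarith, by simpa only [one_div] using hrr⟩
  exact statement10_general hr hconj hT hfin

end
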